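/- Let d > 0. Every bounded-curvature path from configuration (0,0,π) to (d,0,π) has length at least d + 2π; that is, if γ is a bounded-curvature path of length T from (0,0,π) to (d,0,π), then T ≥ d + 2π. -/

import Mathlib

open Real

/-- A bounded-curvature path of length `T ≥ 0` from configuration `(x₀, y₀, α)`
to configuration `(x₁, y₁, β)`: a map `γ : ℝ → ℝ²` (Euclidean plane) that is
continuously differentiable on `[0, T]` with unit-speed derivative `γ'`, whose
derivative is `1`-Lipschitz on `[0, T]` (curvature bound `≤ 1`), starting at
`(x₀, y₀)` with direction `(cos α, sin α)` and ending at `(x₁, y₁)` with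
direction `(cos β, sin β)`. -/
def IsBCPath (T x₀ y₀ α x₁ y₁ β : ℝ) (γ : ℝ → EuclideanSpace ℝ (Fin 2)) : Prop :=
  0 ≤ T ∧
  ∃ γ' : ℝ → EuclideanSpace ℝ (Fin 2),
    (∀ t ∈ Set.Icc (0:ℝ) T, HasDerivWithinAt γ (γ' t) (Set.Icc 0 T) t) ∧
    ContinuousOn γ' (Set.Icc 0 T) ∧
    (∀ t ∈ Set.Icc (0:ℝ) T, ‖γ' t‖ = 1) ∧
    LipschitzOnWith 1 γ' (Set.Icc 0 T) ∧
    γ 0 = ![x₀, y₀] ∧ γ' 0 = ![Real.cos α, Real.sin α] ∧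
    γ T = ![x₁, y₁] ∧ γ' T = ![Real.cos β, Real.sin β]

section BCHelpers

open Set Filter Topology

theorem bc_lift (T : ℝ) (hT : 0 ≤ T) (a b : ℝ → ℝ) (ha : ContinuousOn a (Icc 0 T))
    (hb : ContinuousOn b (Icc 0 T)) (h1 : ∀ t ∈ Icc 0 T, a t ^ 2 + b t ^ 2 = 1)
    (ha0 : a 0 = -1) (hb0 : b 0 = 0) :
    ∃ θ : ℝ → ℝ, Continuous θ ∧ θ 0 = π ∧ ∀ t ∈ Icc 0 T, Real.cos (θ t) = a t ∧ Real.sin (θ t) = b t := by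
  let p : ℝ → ℝ := fun t => (projIcc 0 T hT t : ℝ)
  have hp : Continuous p := continuous_subtype_val.comp continuous_projIcc
  have hpm : ∀ t, p t ∈ Icc 0 T := fun t => (projIcc 0 T hT t).2
  have hpe : ∀ t ∈ Icc 0 T, p t = t := fun t ht => by simp only [p, projIcc_of_mem hT ht]
  have hA : Continuous (fun t => a (p t)) := ha.comp_continuous hp hpm
  have hB : Continuous (fun t => b (p t)) := hb.comp_continuous hp hpm
  have hn : ∀ t, (⟨a (p t), b (p t)⟩ : ℂ) ∈ Submonoid.unitSphere ℂ := by
    intro t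
    rw [← SetLike.mem_coe, Submonoid.coe_unitSphere, mem_sphere_zero_iff_norm, ← sq_eq_sq₀ (norm_nonneg _) zero_le_one, Complex.sq_norm, Complex.normSq_mk]
    linarith [h1 _ (hpm t)]
  have hc : Continuous (fun t => (⟨a (p t), b (p t)⟩ : ℂ)) :=
    Complex.equivRealProdCLM.symm.continuous.comp (hA.prodMk hB)
  let f : C(ℝ, Circle) := ⟨fun t => ⟨_, hn t⟩, hc.subtype_mk hn⟩
  have h0 : Circle.exp π = f 0 := by
    apply Subtype.ext
    have : p 0 = 0 := hpe 0 ⟨le_rfl, hT⟩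
    show (Circle.exp π : ℂ) = ⟨a (p 0), b (p 0)⟩
    rw [this, ha0, hb0, Circle.coe_exp, Complex.exp_pi_mul_I]
    apply Complex.ext <;> simp
  obtain ⟨F, ⟨hF0, hF⟩, -⟩ := Circle.isCoveringMap_exp.existsUnique_continuousMap_lifts f 0 π h0
  refine ⟨F, F.continuous, hF0, fun t ht => ?_⟩
  have h : (Circle.exp (F t) : ℂ) = ⟨a (p t), b (p t)⟩ :=
    congrArg (fun z : Circle => (z : ℂ)) (congrFun hF t)
  rw [hpe t ht, Circle.coe_exp] at h
  have hr := congrArg Complex.re h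
  have hi := congrArg Complex.im h
  rw [Complex.exp_ofReal_mul_I_re] at hr
  rw [Complex.exp_ofReal_mul_I_im] at hi
  exact ⟨hr, hi⟩

/-- local speed bound for the angle -/
theorem bc_speed (T : ℝ) (θ : ℝ → ℝ) (hθ : Continuous θ)
    (hL : ∀ s ∈ Icc 0 T, ∀ t ∈ Icc 0 T,
      (Real.cos (θ t) - Real.cos (θ s)) ^ 2 + (Real.sin (θ t) - Real.sin (θ s)) ^ 2 ≤ (t - s) ^ 2)
    (x : ℝ) (hx : x ∈ Ico 0 T) (ε : ℝ) (hε : 0 < ε) :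
    ∀ᶠ z in 𝓝[>] x, |θ z - θ x| ≤ (1 + ε) * (z - x) := by
  have h1 : ∀ᶠ z in 𝓝[>] x, z ∈ Ioo x T := Ioo_mem_nhdsGT hx.2
  have h2 : ∀ᶠ z in 𝓝[>] x, |θ z - θ x| < min 1 ε := by
    have := Metric.tendsto_nhds.1 (hθ.tendsto x) (min 1 ε) (by positivity)
    exact (this.filter_mono nhdsWithin_le_nhds).mono fun z hz => by rwa [Real.dist_eq] at hz
  filter_upwards [h1, h2] with z hz hz2
  have hl := hL x ⟨hx.1, hx.2.le⟩ z ⟨hx.1.trans hz.1.le, hz.2.le⟩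
  have hD1 := hz2.trans_le (min_le_left _ _)
  have hD2 := hz2.trans_le (min_le_right _ _)
  have hD0 := abs_nonneg (θ z - θ x)
  have hs : (2 * Real.sin (|θ z - θ x| / 2)) ^ 2 ≤ (z - x) ^ 2 := by
    have e1 : Real.cos |θ z - θ x| = Real.cos (θ z) * Real.cos (θ x) + Real.sin (θ z) * Real.sin (θ x) := by
      rw [Real.cos_abs, Real.cos_sub]
    have e2 : Real.cos |θ z - θ x| = 1 - 2 * Real.sin (|θ z - θ x| / 2) ^ 2 := by
      have := Real.cos_two_mul (|θ z - θ x| / 2)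
      have h3 := Real.sin_sq_add_cos_sq (|θ z - θ x| / 2)
      rw [mul_div_cancel₀ _ (two_ne_zero)] at this
      linarith
    nlinarith [Real.sin_sq_add_cos_sq (θ z), Real.sin_sq_add_cos_sq (θ x)]
  generalize |θ z - θ x| = D at *
  have h3 : 2 * Real.sin (D / 2) ≤ z - x :=
    (abs_le_of_sq_le_sq' hs (by linarith [hz.1])).2
  have h4 := Real.sin_ge_sub_cube (x := D / 2) (by positivity)
  have h5 : D * (1 - D ^ 2 / 24) ≤ z - x := by nlinarith
  have h6 : 1 ≤ (1 + ε) * (1 - D ^ 2 / 24) := by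
    have i1 : D ^ 2 ≤ 1 := by nlinarith
    have i2 : D ^ 2 ≤ ε := by nlinarith
    nlinarith [mul_le_mul_of_nonneg_left i1 hε.le]
  calc D = D * 1 := by ring
    _ ≤ D * ((1 + ε) * (1 - D ^ 2 / 24)) := by gcongr
    _ = (1 + ε) * (D * (1 - D ^ 2 / 24)) := by ring
    _ ≤ _ := by gcongr

theorem bc_key (T : ℝ) (θ x : ℝ → ℝ) (hθ : Continuous θ)
    (hL : ∀ s ∈ Icc 0 T, ∀ t ∈ Icc 0 T,
      (Real.cos (θ t) - Real.cos (θ s)) ^ 2 + (Real.sin (θ t) - Real.sin (θ s)) ^ 2 ≤ (t - s) ^ 2)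
    (hx : ∀ t ∈ Icc 0 T, HasDerivWithinAt x (Real.cos (θ t)) (Icc 0 T) t)
    (s t : ℝ) (hs : 0 ≤ s) (hst : s ≤ t) (ht : t ≤ T) :
    (θ t - Real.sin (θ t)) - (θ s - Real.sin (θ s)) ≤ (t - x t) - (s - x s) := by
  have hsub : Icc s t ⊆ Icc 0 T := Icc_subset_Icc hs ht
  have hB : ∀ u ∈ Icc 0 T, HasDerivWithinAt (fun u => (u - x u) - (s - x s)) (1 - Real.cos (θ u)) (Icc 0 T) u :=
    fun u hu => ((hasDerivWithinAt_id u _).sub (hx u hu)).sub_const _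
  refine image_le_of_liminf_slope_right_le_deriv_boundary
    (f := fun u => (θ u - Real.sin (θ u)) - (θ s - Real.sin (θ s)))
    (B := fun u => (u - x u) - (s - x s)) (B' := fun u => 1 - Real.cos (θ u)) (a := s) (b := t)
    (by fun_prop) (by simp) (fun u hu => (hB u (hsub hu)).continuousWithinAt.mono hsub) ?_ ?_
    ⟨hst, le_rfl⟩
  · intro u hu
    refine (hB u (hsub ⟨hu.1, hu.2.le⟩)).mono_of_mem_nhdsWithin ?_
    exact mem_of_superset (Icc_mem_nhdsGE (hu.2.trans_le ht)) (Icc_subset_Icc_left (hs.trans hu.1))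
  · intro u hu r hr
    apply Eventually.frequently
    have hc : 0 ≤ 1 - Real.cos (θ u) := by linarith [Real.cos_le_one (θ u)]
    obtain ⟨q, hq1, hq2⟩ := exists_between hr
    have hq0 : 0 < q := hc.trans_lt hq1
    obtain ⟨ε, hε, hε2⟩ : ∃ ε > 0, q * (1 + ε) < r := by
      refine ⟨(r - q) / (2 * q), div_pos (by linarith) (by linarith), ?_⟩
      have : q * (1 + (r - q) / (2 * q)) = (q + r) / 2 := by field_simp; ring
      linarith
    have hG : HasDerivAt (fun v => v - Real.sin v) (1 - Real.cos (θ u)) (θ u) :=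
      (hasDerivAt_id _).sub (Real.hasDerivAt_sin _)
    have h1 : ∀ᶠ v in 𝓝 (θ u), ‖v - θ u‖⁻¹ * ‖(v - Real.sin v) - (θ u - Real.sin (θ u))‖ < q := by
      have := (hG.hasDerivWithinAt (s := univ)).limsup_norm_slope_le (r := q)
        (by rwa [Real.norm_of_nonneg hc])
      rwa [nhdsWithin_univ] at this
    have h2 := ((hθ.tendsto u).eventually h1).filter_mono (nhdsWithin_le_nhds (s := Ioi u))
    filter_upwards [h2, bc_speed T θ hθ hL u ⟨hs.trans hu.1, hu.2.trans_le ht⟩ ε hε,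
      self_mem_nhdsWithin] with z hz1 hz2 hz3
    have hz3 : 0 < z - u := sub_pos.2 hz3
    have h4 : (θ z - Real.sin (θ z)) - (θ u - Real.sin (θ u)) ≤ q * |θ z - θ u| := by
      by_cases h0 : θ z = θ u
      · simp [h0]
      · have : 0 < |θ z - θ u| := abs_pos.2 (sub_ne_zero.2 h0)
        rw [Real.norm_eq_abs, Real.norm_eq_abs, inv_mul_lt_iff₀ this] at hz1
        linarith [le_abs_self ((θ z - Real.sin (θ z)) - (θ u - Real.sin (θ u)))]
    rw [slope_def_field, div_lt_iff₀ hz3]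
    calc _ = (θ z - Real.sin (θ z)) - (θ u - Real.sin (θ u)) := by ring
      _ ≤ q * |θ z - θ u| := h4
      _ ≤ q * ((1 + ε) * (z - u)) := by gcongr
      _ = q * (1 + ε) * (z - u) := by ring
      _ < r * (z - u) := by gcongr

theorem bc_key' (T : ℝ) (θ x : ℝ → ℝ) (hθ : Continuous θ)
    (hL : ∀ s ∈ Icc 0 T, ∀ t ∈ Icc 0 T,
      (Real.cos (θ t) - Real.cos (θ s)) ^ 2 + (Real.sin (θ t) - Real.sin (θ s)) ^ 2 ≤ (t - s) ^ 2)
    (hx : ∀ t ∈ Icc 0 T, HasDerivWithinAt x (Real.cos (θ t)) (Icc 0 T) t)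
    (s t : ℝ) (hs : 0 ≤ s) (hst : s ≤ t) (ht : t ≤ T) :
    |(θ t - Real.sin (θ t)) - (θ s - Real.sin (θ s))| ≤ (t - x t) - (s - x s) := by
  rw [abs_le]
  refine ⟨?_, bc_key T θ x hθ hL hx s t hs hst ht⟩
  have := bc_key T (fun u => - θ u) x hθ.neg (fun a ha b hb => by
    have := hL a ha b hb
    simp only [Real.cos_neg, Real.sin_neg]
    nlinarith) (fun u hu => by simpa using hx u hu) s t hs hst ht
  simp only [Real.sin_neg] at this
  linarith

theorem bc_mono (T : ℝ) (hT : 0 ≤ T) (f f' : ℝ → ℝ)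
    (hf : ∀ t ∈ Icc 0 T, HasDerivWithinAt f (f' t) (Icc 0 T) t)
    (h : ∀ t ∈ Icc 0 T, 0 ≤ f' t) : f 0 ≤ f T := by
  refine monotoneOn_of_hasDerivWithinAt_nonneg (convex_Icc 0 T)
    (fun t ht => (hf t ht).continuousWithinAt)
    (fun t ht => (hf t (interior_subset ht)).mono interior_subset)
    (fun t ht => h t (interior_subset ht)) ⟨le_rfl, hT⟩ ⟨hT, le_rfl⟩ hT

theorem bc_main (T d : ℝ) (hT : 0 ≤ T) (hd : 0 < d) (θ x y : ℝ → ℝ) (hθ : Continuous θ)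
    (hL : ∀ s ∈ Icc 0 T, ∀ t ∈ Icc 0 T,
      (Real.cos (θ t) - Real.cos (θ s)) ^ 2 + (Real.sin (θ t) - Real.sin (θ s)) ^ 2 ≤ (t - s) ^ 2)
    (hx : ∀ t ∈ Icc 0 T, HasDerivWithinAt x (Real.cos (θ t)) (Icc 0 T) t)
    (hy : ∀ t ∈ Icc 0 T, HasDerivWithinAt y (Real.sin (θ t)) (Icc 0 T) t)
    (h0 : θ 0 = π) (hx0 : x 0 = 0) (hy0 : y 0 = 0) (hxT : x T = d) (hyT : y T = 0)
    (hcT : Real.cos (θ T) = -1) : d + 2 * π ≤ T := by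
  have key := bc_key' T θ x hθ hL hx
  have hpi := Real.pi_pos
  obtain ⟨k, hk⟩ : ∃ k : ℤ, θ T = π + k * (2 * π) := by
    have : Real.cos (θ T - π) = 1 := by rw [Real.cos_sub_pi, hcT]; norm_num
    obtain ⟨k, hk⟩ := (Real.cos_eq_one_iff _).1 this
    exact ⟨k, by linarith⟩
  have hsT : Real.sin (θ T) = 0 := by
    have := Real.sin_sq_add_cos_sq (θ T)
    rw [hcT] at this
    nlinarith
  have hs0 : Real.sin (θ 0) = 0 := by rw [h0, Real.sin_pi]
  by_cases hA : ∃ s ∈ Icc 0 T, θ s = 0 ∨ θ s = 2 * π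
  · obtain ⟨s, hs, hs2⟩ := hA
    have k1 := key 0 s le_rfl hs.1 hs.2
    have k2 := key s T hs.1 hs.2 le_rfl
    have hss : Real.sin (θ s) = 0 := by
      rcases hs2 with h | h <;> rw [h] <;> simp
    rw [hss, hs0, h0, hx0] at k1
    rw [hss, hsT, hk, hxT] at k2
    have a1 : π ≤ |θ s - 0 - (π - 0)| := by
      rcases hs2 with h | h <;> rw [h, le_abs]
      · right; linarith
      · left; linarith
    have a2 : π ≤ |π + k * (2 * π) - 0 - (θ s - 0)| := by
      rcases le_or_gt k 0 with hk0 | hk0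
      · rcases eq_or_lt_of_le hk0 with h' | h'
        · subst h'
          rcases hs2 with h | h <;> rw [h, le_abs] <;> push_cast
          · left; linarith
          · right; linarith
        · have : (k : ℝ) ≤ -1 := by exact_mod_cast (by omega : k ≤ -1)
          rw [le_abs]; right
          rcases hs2 with h | h <;> rw [h] <;> nlinarith
      · have : (1 : ℝ) ≤ k := by exact_mod_cast hk0
        rw [le_abs]; left
        rcases hs2 with h | h <;> rw [h] <;> nlinarith
    linarith
  · push Not at hA
    have hlo : ∀ t ∈ Icc 0 T, 0 < θ t := by
      intro t ht
      by_contra hc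
      obtain ⟨s, hs, hs2⟩ := intermediate_value_Icc' ht.1 hθ.continuousOn
        (show (0:ℝ) ∈ Icc (θ t) (θ 0) from ⟨not_lt.1 hc, by rw [h0]; exact hpi.le⟩)
      exact (hA s ⟨hs.1, hs.2.trans ht.2⟩).1 hs2
    have hhi : ∀ t ∈ Icc 0 T, θ t < 2 * π := by
      intro t ht
      by_contra hc
      obtain ⟨s, hs, hs2⟩ := intermediate_value_Icc ht.1 hθ.continuousOn
        (show (2 * π:ℝ) ∈ Icc (θ 0) (θ t) from ⟨by rw [h0]; linarith, not_lt.1 hc⟩)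
      exact (hA s ⟨hs.1, hs.2.trans ht.2⟩).2 hs2
    have m0 : (0:ℝ) ∈ Icc 0 T := ⟨le_rfl, hT⟩
    have mT : T ∈ Icc 0 T := ⟨hT, le_rfl⟩
    have hTpi : θ T = π := by
      have a := hlo T mT
      have b := hhi T mT
      rw [hk] at a b
      have : k = 0 := by
        have h1 : (-1 : ℝ) < k := by nlinarith
        have h2 : (k : ℝ) < 1 := by nlinarith
        have h1 : -1 < k := by exact_mod_cast h1
        have h2 : k < 1 := by exact_mod_cast h2
        omega
      rw [hk, this]; simp
    obtain ⟨p, hp, hpm⟩ := isCompact_Icc.exists_isMinOn ⟨0, m0⟩ hθ.continuousOn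
    obtain ⟨q, hq, hqm⟩ := isCompact_Icc.exists_isMaxOn ⟨0, m0⟩ hθ.continuousOn
    have hmin : ∀ t ∈ Icc 0 T, θ p ≤ θ t := fun t ht => hpm ht
    have hmax : ∀ t ∈ Icc 0 T, θ t ≤ θ q := fun t ht => hqm ht
    have hp1 : θ p ≤ π := h0 ▸ hmin 0 m0
    have hq1 : π ≤ θ q := h0 ▸ hmax 0 m0
    have hsp : 0 ≤ Real.sin (θ p) := Real.sin_nonneg_of_nonneg_of_le_pi (hlo p hp).le hp1
    have hsq : Real.sin (θ q) ≤ 0 := by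
      have := Real.sin_nonneg_of_nonneg_of_le_pi (x := θ q - π) (by linarith) (by linarith [hhi q hq])
      rw [Real.sin_sub_pi] at this
      linarith
    rcases le_or_gt π (θ q - θ p) with hgap | hgap
    · rcases le_total p q with hpq | hpq
      · have k1 := (abs_le.1 (key 0 p le_rfl hp.1 hp.2)).1
        have k2 := (abs_le.1 (key p q hp.1 hpq hq.2)).2
        have k3 := (abs_le.1 (key q T hq.1 hq.2 le_rfl)).1
        rw [hs0, h0] at k1
        rw [hsT, hTpi] at k3
        linarith
      · have k1 := (abs_le.1 (key 0 q le_rfl hq.1 hq.2)).2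
        have k2 := (abs_le.1 (key q p hq.1 hpq hp.2)).1
        have k3 := (abs_le.1 (key p T hp.1 hp.2 le_rfl)).2
        rw [hs0, h0] at k1
        rw [hsT, hTpi] at k3
        linarith
    · exfalso
      have f1 := bc_mono T hT (fun t => x t * Real.sin (θ q) - y t * Real.cos (θ q))
        (fun t => Real.cos (θ t) * Real.sin (θ q) - Real.sin (θ t) * Real.cos (θ q))
        (fun t ht => ((hx t ht).mul_const _).sub ((hy t ht).mul_const _))
        (fun t ht => by
          have := Real.sin_nonneg_of_nonneg_of_le_pi (x := θ q - θ t)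
            (by linarith [hmax t ht]) (by linarith [hmin t ht])
          rw [Real.sin_sub] at this
          linarith)
      have f2 := bc_mono T hT (fun t => y t * Real.cos (θ p) - x t * Real.sin (θ p))
        (fun t => Real.sin (θ t) * Real.cos (θ p) - Real.cos (θ t) * Real.sin (θ p))
        (fun t ht => ((hy t ht).mul_const _).sub ((hx t ht).mul_const _))
        (fun t ht => by
          have := Real.sin_nonneg_of_nonneg_of_le_pi (x := θ t - θ p)
            (by linarith [hmin t ht]) (by linarith [hmax t ht])
          rw [Real.sin_sub] at this
          linarith)
      simp only [hx0, hy0, hxT, hyT] at f1 f2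
      have g1 : θ q = π := by
        by_contra hne
        have h3 : π < θ q := lt_of_le_of_ne hq1 (Ne.symm hne)
        have := Real.sin_pos_of_pos_of_lt_pi (x := θ q - π) (by linarith) (by linarith [hhi q hq])
        rw [Real.sin_sub_pi] at this
        nlinarith
      have g2 : θ p = π := by
        by_contra hne
        have h3 : θ p < π := lt_of_le_of_ne hp1 hne
        have := Real.sin_pos_of_pos_of_lt_pi (hlo p hp) h3
        nlinarith
      have f3 := bc_mono T hT (fun t => - x t) (fun t => - Real.cos (θ t))
        (fun t ht => (hx t ht).neg) (fun t ht => by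
          have : θ t = π := le_antisymm (g1 ▸ hmax t ht) (g2 ▸ hmin t ht)
          rw [this, Real.cos_pi]; norm_num)
      simp only [hx0, hxT] at f3
      linarith

end BCHelpers

/-- For `d > 0`, every bounded-curvature path from
`(0, 0, π)` to `(d, 0, π)` has length at least `d + 2π`. -/
theorem reversing_lower_bound (d : ℝ) (hd : 0 < d) (T : ℝ)
    (γ : ℝ → EuclideanSpace ℝ (Fin 2)) (hγ : IsBCPath T 0 0 π d 0 π γ) :
    d + 2 * π ≤ T := by
  obtain ⟨hT, γ', hder, hcont, hnorm, hlip, hg0, hg'0, hgT, hg'T⟩ := hγ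
  have hc : ∀ i : Fin 2, ∀ t ∈ Set.Icc (0:ℝ) T,
      HasDerivWithinAt (fun t => γ t i) (γ' t i) (Set.Icc 0 T) t := fun i t ht =>
    (EuclideanSpace.proj (𝕜 := ℝ) i).hasFDerivAt.comp_hasDerivWithinAt t (hder t ht)
  have hcc : ∀ i : Fin 2, ContinuousOn (fun t => γ' t i) (Set.Icc 0 T) := fun i =>
    (EuclideanSpace.proj (𝕜 := ℝ) i).continuous.comp_continuousOn hcont
  have e0 := congrFun hg0
  have e0' := congrFun hg'0
  have eT := congrFun hgT
  have eT' := congrFun hg'T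
  have a0 : γ' 0 0 = -1 := by simpa using e0' 0
  have b0 : γ' 0 1 = 0 := by simpa using e0' 1
  have aT : γ' T 0 = -1 := by simpa using eT' 0
  obtain ⟨θ, hθ, hθ0, hθc⟩ := bc_lift T hT (fun t => γ' t 0) (fun t => γ' t 1) (hcc 0) (hcc 1)
    (fun t ht => by
      have := EuclideanSpace.real_norm_sq_eq (γ' t)
      rw [hnorm t ht, Fin.sum_univ_two] at this
      linarith) a0 b0
  refine bc_main T d hT hd θ (fun t => γ t 0) (fun t => γ t 1) hθ ?_
    (fun t ht => by rw [(hθc t ht).1]; exact hc 0 t ht)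
    (fun t ht => by rw [(hθc t ht).2]; exact hc 1 t ht) hθ0
    (by simpa using e0 0) (by simpa using e0 1) (by simpa using eT 0) (by simpa using eT 1)
    (by rw [(hθc T ⟨hT, le_rfl⟩).1, aT])
  intro s hs t ht
  rw [(hθc t ht).1, (hθc t ht).2, (hθc s hs).1, (hθc s hs).2]
  have h1 := hlip.dist_le_mul t ht s hs
  have h2 := EuclideanSpace.real_norm_sq_eq (γ' t - γ' s)
  rw [Fin.sum_univ_two] at h2
  simp only [PiLp.sub_apply] at h2
  rw [← h2, ← sq_abs (t - s)]
  rw [dist_eq_norm, Real.dist_eq, NNReal.coe_one, one_mul] at h1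
  gcongr
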